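/- Let j ≥ 2 and N = 4j−1. Let p : ℚ^N → U_N be the S_N-equivariant projection p(x) = x − ((∑_i x_i)/N)·(1,…,1) onto the sum-zero hyperplane U_N = { x ∈ ℚ^N : ∑_i x_i = 0 }, and let Λ^{2j} p : Λ^{2j} ℚ^N → Λ^{2j} U_N be the induced map on exterior powers. Then the ℚ[S_N]-submodule K of Λ^{2j} ℚ^N generated by ρ equals the kernel of Λ^{2j} p. (In particular ρ ≠ 0 and Λ^{2j}p(ρ) = 0; this identifies K with the kernel of the surjection from the induced representation Ind_{S_{2j−1} × S_{2j}}^{S_{4j−1}}(triv ⊠ sgn) onto the hook V_{2j−1,1^{2j}}.) -/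

import Mathlib

set_option synthInstance.maxHeartbeats 1000000
set_option maxHeartbeats 1000000

noncomputable section

open ExteriorAlgebra

/-- The standard basis vector `e_{m+1}` of `ℚ^{4j−1}` (with `0`-based index `m`). -/
def ε (j : ℕ) (m : Fin (4*j-1)) : Fin (4*j-1) → ℚ := Pi.single m 1

/-- The action of `S_N` on the exterior algebra of `ℚ^N` induced by permuting the standard
basis vectors (`g` sends `e_m` to `e_{g m}`). -/
def pact (N : ℕ) (g : Equiv.Perm (Fin N)) :
    ExteriorAlgebra ℚ (Fin N → ℚ) →ₗ[ℚ] ExteriorAlgebra ℚ (Fin N → ℚ) :=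
  (ExteriorAlgebra.map (LinearMap.funLeft ℚ ℚ ⇑g⁻¹)).toLinearMap

/-- The element of the `i`-th loop `B_i = {2i+2, 2i+3}` (1-indexed; here `i` is `0`-based)
selected by the Boolean `b`. -/
def idx (j : ℕ) (k : Fin (2*j-2)) (b : Bool) : Fin (4*j-1) :=
  ⟨2*(k : ℕ) + 3 + b.toNat, by have := Bool.toNat_lt b; omega⟩

/-- `S_I`: the sum, over all choices of one element `s_i ∈ B_i` for each loop `i ∉ I`, of the
wedge products `e_{s_{i_1}} ∧ ⋯ ∧ e_{s_{i_m}}` taken in increasing order of the loop indices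
`i ∉ I`. -/
def SI (j : ℕ) (I : Finset (Fin (2*j-2))) : ExteriorAlgebra ℚ (Fin (4*j-1) → ℚ) :=
  ∑ c ∈ Finset.univ.filter (fun c : Fin (2*j-2) → Bool => ∀ i ∈ I, c i = false),
    (List.ofFn fun k : Fin (2*j-2) =>
      if k ∈ I then 1 else ExteriorAlgebra.ι ℚ (ε j (idx j k (c k)))).prod

/-- The wedge `e_{2j} ∧ e_{2j+1} ∧ ⋯ ∧ e_{4j−1}`. -/
def ρbase (j : ℕ) : ExteriorAlgebra ℚ (Fin (4*j-1) → ℚ) :=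
  (List.ofFn fun k : Fin (2*j) =>
    ExteriorAlgebra.ι ℚ (ε j ⟨2*j - 1 + (k : ℕ), by omega⟩)).prod

/-- `ρ = (1 + ∑_{i=1}^{2j−1} (i 2j)) · (e_{2j} ∧ e_{2j+1} ∧ ⋯ ∧ e_{4j−1})`. -/
def ρElt (j : ℕ) : ExteriorAlgebra ℚ (Fin (4*j-1) → ℚ) :=
  ρbase j + ∑ m : Fin (2*j-1),
    pact (4*j-1) (Equiv.swap (⟨(m : ℕ), by omega⟩ : Fin (4*j-1)) ⟨2*j - 1, by have := m.isLt; omega⟩) (ρbase j)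

/-- `K`: the `ℚ[S_{4j−1}]`-submodule of `W = Λ^{2j} ℚ^{4j−1}` generated by `ρ`, i.e. the span
of the `S_{4j−1}`-orbit of `ρ`. -/
def Ksub (j : ℕ) : Submodule ℚ (ExteriorAlgebra ℚ (Fin (4*j-1) → ℚ)) :=
  Submodule.span ℚ (Set.range fun g : Equiv.Perm (Fin (4*j-1)) => pact (4*j-1) g (ρElt j))

end

noncomputable section

/-- The sum-of-coordinates linear functional on `ℚ^N`. -/
def sumMap (N : ℕ) : (Fin N → ℚ) →ₗ[ℚ] ℚ := ∑ i, LinearMap.proj i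

/-- The standard representation `U_N = {x ∈ ℚ^N : ∑ x_i = 0}` of the symmetric group. -/
def U (N : ℕ) : Submodule ℚ (Fin N → ℚ) := LinearMap.ker (sumMap N)

lemma mem_U {N : ℕ} (x : Fin N → ℚ) : x ∈ U N ↔ ∑ i, x i = 0 := by
  simp [U, sumMap, LinearMap.mem_ker]

/-- The constant-functions embedding `ℚ → ℚ^N`. -/
def constF (N : ℕ) : ℚ →ₗ[ℚ] (Fin N → ℚ) := LinearMap.pi fun _ => LinearMap.id

/-- The endomorphism `x ↦ x − ((∑_i x_i)/N)·(1,…,1)` of `ℚ^N`. -/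
def pEndo (N : ℕ) : (Fin N → ℚ) →ₗ[ℚ] (Fin N → ℚ) :=
  LinearMap.id - (N : ℚ)⁻¹ • (constF N ∘ₗ sumMap N)

lemma pEndo_apply {N : ℕ} (x : Fin N → ℚ) (i : Fin N) :
    pEndo N x i = x i - (N : ℚ)⁻¹ * (∑ j, x j) := by
  simp [pEndo, constF, sumMap, LinearMap.sub_apply]

/-- The `S_N`-equivariant projection `p : ℚ^N → U_N`,
`p(x) = x − ((∑_i x_i)/N)·(1,…,1)`. -/
def pU (N : ℕ) : (Fin N → ℚ) →ₗ[ℚ] ↥(U N) :=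
  (pEndo N).codRestrict (U N) (fun x => by
    rw [mem_U]
    rcases Nat.eq_zero_or_pos N with hN | hN
    · subst hN
      simp
    · have hN' : (N : ℚ) ≠ 0 := Nat.cast_ne_zero.mpr (by omega)
      rw [Finset.sum_congr rfl (fun i _ => pEndo_apply x i), Finset.sum_sub_distrib,
        Finset.sum_const, Finset.card_univ, Fintype.card_fin, nsmul_eq_mul, ← mul_assoc,
        mul_inv_cancel₀ hN', one_mul, sub_self])

end

noncomputable section

open ExteriorAlgebra

namespace KAux

/-- The image of the all-ones vector in the exterior algebra. -/
def sE (N : ℕ) : ExteriorAlgebra ℚ (Fin N → ℚ) := ι ℚ (fun _ => (1 : ℚ))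

/-- The wedge of standard basis vectors indexed by `f`. -/
def wE (N n : ℕ) (f : Fin n → Fin N) : ExteriorAlgebra ℚ (Fin N → ℚ) :=
  (List.ofFn fun k => ι ℚ (Pi.single (f k) (1 : ℚ) : Fin N → ℚ)).prod

lemma sE_eq_sum (N : ℕ) : sE N = ∑ i, ι ℚ (Pi.single i (1 : ℚ) : Fin N → ℚ) := by
  rw [sE, ← map_sum]
  congr 1
  exact (Finset.univ_sum_single (fun _ : Fin N => (1 : ℚ))).symm

lemma funLeft_single (N : ℕ) (g : Equiv.Perm (Fin N)) (i : Fin N) :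
    LinearMap.funLeft ℚ ℚ ⇑g⁻¹ (Pi.single i (1 : ℚ)) = Pi.single (g i) 1 := by
  ext k
  simp only [LinearMap.funLeft_apply, Pi.single_apply]
  congr 1
  rw [Equiv.Perm.inv_eq_iff_eq]

lemma pact_mul (N : ℕ) (g : Equiv.Perm (Fin N)) (x y : ExteriorAlgebra ℚ (Fin N → ℚ)) :
    pact N g (x * y) = pact N g x * pact N g y := by
  simp [pact]

lemma pact_sE (N : ℕ) (g : Equiv.Perm (Fin N)) : pact N g (sE N) = sE N := by
  simp only [pact, sE, AlgHom.toLinearMap_apply, map_apply_ι]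
  rfl

lemma pact_wE (N n : ℕ) (g : Equiv.Perm (Fin N)) (f : Fin n → Fin N) :
    pact N g (wE N n f) = wE N n (g ∘ f) := by
  simp only [pact, wE, AlgHom.toLinearMap_apply, map_list_prod, List.map_ofFn]
  congr 2
  ext k
  simp only [Function.comp_apply, map_apply_ι, funLeft_single]

lemma wE_split (N n m : ℕ) (h : n = m + 1) (f : Fin n → Fin N) :
    wE N n f = ι ℚ (Pi.single (f ⟨0, by omega⟩) (1 : ℚ) : Fin N → ℚ) *
      wE N m (fun k => f ⟨k + 1, by omega⟩) := by
  subst h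
  simp only [wE, List.ofFn_succ, List.prod_cons]
  rfl

lemma sum_split (N a b : ℕ) (h : N = a + 1 + b) {M : Type*} [AddCommMonoid M] (F : Fin N → M) :
    ∑ i, F i = ((∑ m : Fin a, F ⟨m, by omega⟩) + F ⟨a, by omega⟩)
      + ∑ k : Fin b, F ⟨a + 1 + k, by omega⟩ := by
  subst h
  rw [Fin.sum_univ_add, Fin.sum_univ_castSucc]
  rfl

/-- The indices `2j, …, 4j-2` (0-based). -/
def tailIdx (j : ℕ) (k : Fin (2*j-1)) : Fin (4*j-1) := ⟨2*j + k, by omega⟩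

lemma ρbase_eq (j : ℕ) (hj : 2 ≤ j) : ρbase j =
    ι ℚ (Pi.single (⟨2*j-1, by omega⟩ : Fin (4*j-1)) (1 : ℚ) : Fin (4*j-1) → ℚ) *
      wE (4*j-1) (2*j-1) (tailIdx j) := by
  have h : ρbase j = wE (4*j-1) (2*j) (fun k => ⟨2*j-1+k, by omega⟩) := rfl
  rw [h, wE_split _ _ (2*j-1) (by omega)]
  congr 2
  ext k
  simp only [tailIdx]
  omega

lemma ρElt_eq (j : ℕ) (hj : 2 ≤ j) :
    ρElt j = sE (4*j-1) * wE (4*j-1) (2*j-1) (tailIdx j) := by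
  rw [sE_eq_sum, sum_split (4*j-1) (2*j-1) (2*j-1) (by omega), add_mul, add_mul,
    Finset.sum_mul, Finset.sum_mul]
  have hz : ∀ k : Fin (2*j-1), ι ℚ (Pi.single (⟨2*j-1+1+k, by omega⟩ : Fin (4*j-1)) (1 : ℚ) :
      Fin (4*j-1) → ℚ) * wE (4*j-1) (2*j-1) (tailIdx j) = 0 := by
    intro k
    have := ι_mul_prod_list (R := ℚ)
      (fun k => (Pi.single (tailIdx j k) (1 : ℚ) : Fin (4*j-1) → ℚ)) k
    rw [← this, wE]
    have e : (⟨2*j-1+1+k, by omega⟩ : Fin (4*j-1)) = tailIdx j k := by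
      ext; simp only [tailIdx]; omega
    rw [e]
  rw [Finset.sum_eq_zero (fun k _ => hz k), add_zero, add_comm, ρElt, ρbase_eq j hj]
  congr 1
  refine Finset.sum_congr rfl fun m _ => ?_
  rw [pact_mul, pact_wE]
  congr 1
  · simp only [pact, AlgHom.toLinearMap_apply, map_apply_ι, funLeft_single,
      Equiv.swap_apply_right]
  · congr 1
    ext k
    simp only [Function.comp_apply]
    rw [Equiv.swap_apply_of_ne_of_ne]
    · simp only [tailIdx, ne_eq, Fin.mk.injEq]; omega
    · simp only [tailIdx, ne_eq, Fin.mk.injEq]; omega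

lemma extPow_eq_span (N n : ℕ) :
    (⋀[ℚ]^n (Fin N → ℚ)) = Submodule.span ℚ (Set.range (wE N n)) := by
  have h1 : LinearMap.range (ι ℚ : (Fin N → ℚ) →ₗ[ℚ] _) =
      Submodule.span ℚ (Set.range fun i => ι ℚ (Pi.single i (1 : ℚ) : Fin N → ℚ)) := by
    have := (Pi.basisFun ℚ (Fin N)).span_eq
    rw [LinearMap.range_eq_map, ← this, Submodule.map_span, ← Set.range_comp]
    congr 2
    ext i
    simp
  change LinearMap.range (ι ℚ : (Fin N → ℚ) →ₗ[ℚ] _) ^ n = _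
  rw [h1, Submodule.span_pow]
  congr 1
  ext a
  rw [Set.mem_pow]
  constructor
  · rintro ⟨f, rfl⟩
    choose g hg using fun i => (f i).2
    refine ⟨g, ?_⟩
    simp only [wE]
    congr 2
    ext i
    exact hg i
  · rintro ⟨f, rfl⟩
    exact ⟨fun i => ⟨_, f i, rfl⟩, rfl⟩

lemma wE_not_inj (N n : ℕ) (f : Fin n → Fin N) (hf : ¬ Function.Injective f) : wE N n f = 0 := by
  have := (ιMulti ℚ n).map_eq_zero_of_not_injective
    (fun k => (Pi.single (f k) (1 : ℚ) : Fin N → ℚ)) (fun h => hf fun a b hab => h (by simp [hab]))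
  rwa [ιMulti_apply] at this

lemma mul_wE_mem (j : ℕ) (hj : 2 ≤ j) (f : Fin (2*j-1) → Fin (4*j-1)) :
    sE (4*j-1) * wE (4*j-1) (2*j-1) f ∈ Ksub j := by
  by_cases hf : Function.Injective f
  · have ht : Function.Injective (tailIdx j) := by
      intro a b h
      simp only [tailIdx, Fin.mk.injEq] at h
      ext; omega
    obtain ⟨g, hg⟩ : ∃ g : Equiv.Perm (Fin (4*j-1)), g ∘ tailIdx j = f := by
      obtain ⟨g, hg⟩ := (Equiv.Perm.isMultiplyPretransitive (Fin (4*j-1)) (2*j-1)).exists_smul_eq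
        ⟨tailIdx j, ht⟩ ⟨f, hf⟩
      refine ⟨g, ?_⟩
      ext k
      exact congrArg Fin.val (DFunLike.congr_fun hg k)
    refine Submodule.subset_span ⟨g, ?_⟩
    simp only [ρElt_eq j hj, pact_mul, pact_sE, pact_wE, hg]
  · rw [wE_not_inj _ _ _ hf, mul_zero]
    exact zero_mem _

lemma mul_mem (j : ℕ) (hj : 2 ≤ j) (y) (hy : y ∈ ⋀[ℚ]^(2*j-1) (Fin (4*j-1) → ℚ)) :
    sE (4*j-1) * y ∈ Ksub j := by
  rw [extPow_eq_span] at hy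
  induction hy using Submodule.span_induction with
  | mem x h => obtain ⟨f, rfl⟩ := h; exact mul_wE_mem j hj f
  | zero => simp
  | add x y _ _ hx hy => rw [mul_add]; exact add_mem hx hy
  | smul a x _ hx => rw [mul_smul_comm]; exact Submodule.smul_mem _ _ hx

lemma pEndo_eq (N : ℕ) (v : Fin N → ℚ) :
    ∃ c : ℚ, pEndo N v = v - c • (fun _ => (1 : ℚ)) := by
  refine ⟨(N : ℚ)⁻¹ * ∑ j, v j, ?_⟩
  ext i
  rw [pEndo_apply]
  simp

lemma sub_map_wE (N n : ℕ) (f : Fin (n+1) → Fin N) :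
    ∃ y ∈ ⋀[ℚ]^n (Fin N → ℚ), wE N (n+1) f - map (pEndo N) (wE N (n+1) f) = sE N * y := by
  have hw : ∀ m (f : Fin m → Fin N), wE N m f ∈ ⋀[ℚ]^m (Fin N → ℚ) := fun m f => by
    rw [extPow_eq_span]; exact Submodule.subset_span ⟨f, rfl⟩
  induction n with
  | zero =>
    obtain ⟨c, hc⟩ := pEndo_eq N (Pi.single (f 0) 1)
    refine ⟨algebraMap ℚ _ c, ?_, ?_⟩
    · change _ ∈ LinearMap.range (ι ℚ : (Fin N → ℚ) →ₗ[ℚ] _) ^ 0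
      rw [pow_zero]
      exact Submodule.algebraMap_mem c
    · simp only [wE, List.ofFn_succ, List.ofFn_zero, List.prod_cons, List.prod_nil, mul_one,
        map_apply_ι, hc, map_sub, map_smul, sE, ← Algebra.commutes, ← Algebra.smul_def]
      abel
  | succ n ih =>
    obtain ⟨y, hy, h⟩ := ih (fun k => f ⟨k + 1, by omega⟩)
    rw [wE_split N (n+1+1) (n+1) rfl]
    set w := wE N (n+1) (fun k => f ⟨k + 1, by omega⟩) with hwdef
    set v : Fin N → ℚ := Pi.single (f ⟨0, by omega⟩) 1
    obtain ⟨c, hc⟩ := pEndo_eq N v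
    refine ⟨c • w - ι ℚ (pEndo N v) * y, ?_, ?_⟩
    · refine sub_mem (Submodule.smul_mem _ _ (hw _ _)) ?_
      change _ ∈ LinearMap.range (ι ℚ : (Fin N → ℚ) →ₗ[ℚ] _) ^ (n+1)
      rw [pow_succ']
      exact Submodule.mul_mem_mul ⟨_, rfl⟩ hy
    · have hanti : ι ℚ (pEndo N v) * sE N = - (sE N * ι ℚ (pEndo N v)) := by
        rw [eq_neg_iff_add_eq_zero]
        exact ι_add_mul_swap _ _
      have hv : ι ℚ v = ι ℚ (pEndo N v) + c • sE N := by
        rw [hc, sE]; simp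
      have hm : map (pEndo N) w = w - sE N * y := by rw [← h]; abel
      rw [map_mul, map_apply_ι, hm, hv, mul_sub, mul_sub, add_mul, ← mul_assoc, hanti,
        smul_mul_assoc, mul_smul_comm, neg_mul, mul_assoc]
      abel

lemma sub_map (N n : ℕ) (x) (hx : x ∈ ⋀[ℚ]^(n+1) (Fin N → ℚ)) :
    ∃ y ∈ ⋀[ℚ]^n (Fin N → ℚ), x - map (pEndo N) x = sE N * y := by
  rw [extPow_eq_span] at hx
  induction hx using Submodule.span_induction with
  | mem x h => obtain ⟨f, rfl⟩ := h; exact sub_map_wE N n f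
  | zero => exact ⟨0, zero_mem _, by simp⟩
  | add x y _ _ hx hy =>
    obtain ⟨a, ha, ha'⟩ := hx
    obtain ⟨b, hb, hb'⟩ := hy
    refine ⟨a + b, add_mem ha hb, ?_⟩
    rw [mul_add, ← ha', ← hb', map_add]; abel
  | smul c x _ hx =>
    obtain ⟨a, ha, ha'⟩ := hx
    refine ⟨c • a, Submodule.smul_mem _ _ ha, ?_⟩
    rw [mul_smul_comm, ← ha', map_smul, smul_sub]

lemma map_pU_sE (N : ℕ) (hN : 0 < N) : map (pU N) (sE N) = 0 := by
  have : pU N (fun _ => (1 : ℚ)) = 0 := by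
    ext i
    have hN' : (N : ℚ) ≠ 0 := Nat.cast_ne_zero.mpr (by omega)
    change pEndo N _ i = 0
    rw [pEndo_apply]
    simp [hN']
  rw [sE, map_apply_ι, this, map_zero]

end KAux

open KAux in
/-- For `j ≥ 2` and `N = 4j−1`, the `ℚ[S_N]`-submodule `K ⊆ Λ^{2j} ℚ^N`
generated by `ρ` equals the kernel of the map `Λ^{2j} p : Λ^{2j} ℚ^N → Λ^{2j} U_N` induced by
the equivariant projection `p : ℚ^N → U_N` onto the sum-zero hyperplane (expressed inside the
exterior algebras: `K = Λ^{2j} ℚ^N ⊓ ker(ExteriorAlgebra.map p)`). -/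
theorem stmt11 (j : ℕ) (hj : 2 ≤ j) :
    Ksub j = (⋀[ℚ]^(2*j) (Fin (4*j-1) → ℚ)) ⊓
      LinearMap.ker (ExteriorAlgebra.map (pU (4*j-1))).toLinearMap := by
  have hn : 2*j-1+1 = 2*j := by omega
  apply le_antisymm
  · refine Submodule.span_le.mpr ?_
    rintro _ ⟨g, rfl⟩
    simp only [ρElt_eq j hj, pact_mul, pact_sE, pact_wE]
    refine ⟨?_, ?_⟩
    · generalize hz : wE (4*j-1) (2*j-1) (⇑g ∘ tailIdx j) = z
      rw [← hn]
      change _ ∈ LinearMap.range (ι ℚ : (Fin (4*j-1) → ℚ) →ₗ[ℚ] _) ^ (2*j-1+1)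
      rw [pow_succ', ← hz]
      refine Submodule.mul_mem_mul ⟨_, rfl⟩ ?_
      change _ ∈ ⋀[ℚ]^(2*j-1) (Fin (4*j-1) → ℚ)
      rw [extPow_eq_span]
      exact Submodule.subset_span ⟨_, rfl⟩
    · change ExteriorAlgebra.map (pU (4*j-1)) _ = 0
      rw [map_mul, map_pU_sE _ (by omega), zero_mul]
  · rintro x ⟨hx, hk⟩
    have hk : ExteriorAlgebra.map (pU (4*j-1)) x = 0 := hk
    have hk2 : ExteriorAlgebra.map (pEndo (4*j-1)) x = 0 := by
      have hc : pEndo (4*j-1) = (U (4*j-1)).subtype ∘ₗ pU (4*j-1) := rfl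
      rw [hc, ← map_comp_map, AlgHom.comp_apply, hk, map_zero]
    have hx : x ∈ ⋀[ℚ]^(2*j) (Fin (4*j-1) → ℚ) := hx
    rw [← hn] at hx
    obtain ⟨y, hy, h⟩ := sub_map _ _ x hx
    rw [hk2, sub_zero] at h
    rw [h]
    exact mul_mem j hj y hy


end
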